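/- Let φ(x) = ST_22(I,x) for some modal intuitionistic formula I, let k = r(φ) be its degree, let Σ_φ ⊆ Θ, let (M₁,t) and (M₂,u) be pointed Θ-models, and let (A,B) be a (2,2)-modal ⟨(M₁,t),(M₂,u)⟩_l-asimulation. Then for all p,q ∈ {1,2}, every (m+1)-tuple (ā_m,a) of elements of M_p and every (m+1)-tuple (b̄_m,b) of elements of M_q: if (ā_m,a) A (b̄_m,b), m + k ≤ l, and M_p,a ⊨ φ(x), then M_q,b ⊨ φ(x). -/

import Mathlib

namespace ModalIntAsim

/-- Binary relation symbols of the correspondence vocabulary: R, R_□, R_◇. -/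
inductive RelSym : Type
  | r | box | diam
deriving DecidableEq

/-- Formulas of the correspondence language: classical first-order logic without
identity, with variables indexed by `ℕ`, unary predicate letters `P n` (n : ℕ),
and the three binary relation symbols. -/
inductive FOForm : Type
  | falsum : FOForm
  | pred : ℕ → ℕ → FOForm            -- `pred n v` is `P_n(x_v)`
  | rel : RelSym → ℕ → ℕ → FOForm    -- `rel s v w` is `S(x_v, x_w)`
  | conj : FOForm → FOForm → FOForm
  | disj : FOForm → FOForm → FOForm
  | impl : FOForm → FOForm → FOForm
  | all : ℕ → FOForm → FOForm
  | ex : ℕ → FOForm → FOForm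

namespace FOForm

/-- Free variables of a correspondence formula. -/
def freeVars : FOForm → Finset ℕ
  | falsum => ∅
  | pred _ v => {v}
  | rel _ v w => {v, w}
  | conj f g => f.freeVars ∪ g.freeVars
  | disj f g => f.freeVars ∪ g.freeVars
  | impl f g => f.freeVars ∪ g.freeVars
  | all v f => f.freeVars \ {v}
  | ex v f => f.freeVars \ {v}

/-- The unary predicate letters occurring in a formula (the binary relation
symbols R, R_□, R_◇ are regarded as belonging to every vocabulary Σ_φ). -/
def predLetters : FOForm → Finset ℕ
  | falsum => ∅
  | pred n _ => {n}
  | rel _ _ _ => ∅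
  | conj f g => f.predLetters ∪ g.predLetters
  | disj f g => f.predLetters ∪ g.predLetters
  | impl f g => f.predLetters ∪ g.predLetters
  | all _ f => f.predLetters
  | ex _ f => f.predLetters

/-- Degree of a formula: the greatest number of nested quantifiers. -/
def degree : FOForm → ℕ
  | falsum => 0
  | pred _ _ => 0
  | rel _ _ _ => 0
  | conj f g => max f.degree g.degree
  | disj f g => max f.degree g.degree
  | impl f g => max f.degree g.degree
  | all _ f => f.degree + 1
  | ex _ f => f.degree + 1

end FOForm

/-- A model of the correspondence language: a domain together with
interpretations of R, R_□, R_◇ and of the unary predicate letters.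
(A Θ-model only consults the letters in Θ.) -/
structure Model : Type 1 where
  U : Type
  rel : U → U → Prop
  relBox : U → U → Prop
  relDiam : U → U → Prop
  pred : ℕ → U → Prop

/-- Interpretation of a binary relation symbol in a model. -/
def Model.relOf (M : Model) : RelSym → M.U → M.U → Prop
  | .r => M.rel
  | .box => M.relBox
  | .diam => M.relDiam

/-- Tarskian satisfaction of a formula in a model under an assignment. -/
def Sat (M : Model) : FOForm → (ℕ → M.U) → Prop
  | .falsum, _ => False
  | .pred n v, α => M.pred n (α v)
  | .rel s v w, α => M.relOf s (α v) (α w)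
  | .conj f g, α => Sat M f α ∧ Sat M g α
  | .disj f g, α => Sat M f α ∨ Sat M g α
  | .impl f g, α => Sat M f α → Sat M g α
  | .all v f, α => ∀ u : M.U, Sat M f (Function.update α v u)
  | .ex v f, α => ∃ u : M.U, Sat M f (Function.update α v u)

/-- `M, a ⊨ φ(x)`: φ is true in `M` under any assignment sending `x` to `a`. -/
def SatAt (M : Model) (a : M.U) (x : ℕ) (φ : FOForm) : Prop :=
  ∀ α : ℕ → M.U, α x = a → Sat M φ α

/-- Logical equivalence of correspondence formulas. -/
def Equiv (φ ψ : FOForm) : Prop :=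
  ∀ (M : Model) (α : ℕ → M.U), Sat M φ α ↔ Sat M ψ α

/-- Logical entailment between correspondence formulas. -/
def Entails (φ ψ : FOForm) : Prop :=
  ∀ (M : Model) (α : ℕ → M.U), Sat M φ α → Sat M ψ α

/-- Modal intuitionistic formulas: built from propositional letters `p n`
using ⊥, ∧, ∨, →, □, ◇. -/
inductive MForm : Type
  | bot : MForm
  | prop : ℕ → MForm
  | conj : MForm → MForm → MForm
  | disj : MForm → MForm → MForm
  | impl : MForm → MForm → MForm
  | box : MForm → MForm
  | diam : MForm → MForm

/-- The (i,j)-standard x-translation `ST_ij`.  `boxOne = true` means the box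
clause (□₁) is used (i = 1), `boxOne = false` means (□₂) (i = 2); likewise
`diamOne = true` means the diamond clause (◇₁) (j = 1) and `diamOne = false`
means (◇₂) (j = 2).  Bound variables are chosen fresh as `x+1`, `x+2`. -/
def ST (boxOne diamOne : Bool) : MForm → ℕ → FOForm
  | .bot, _ => .falsum
  | .prop n, x => .pred n x
  | .conj I J, x => .conj (ST boxOne diamOne I x) (ST boxOne diamOne J x)
  | .disj I J, x => .disj (ST boxOne diamOne I x) (ST boxOne diamOne J x)
  | .impl I J, x =>
      .all (x + 1) (.impl (.rel .r x (x + 1))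
        (.impl (ST boxOne diamOne I (x + 1)) (ST boxOne diamOne J (x + 1))))
  | .box I, x =>
      if boxOne then
        .all (x + 1) (.impl (.rel .box x (x + 1)) (ST boxOne diamOne I (x + 1)))
      else
        .all (x + 1) (.impl (.rel .r x (x + 1))
          (.all (x + 2) (.impl (.rel .box (x + 1) (x + 2)) (ST boxOne diamOne I (x + 2)))))
  | .diam I, x =>
      if diamOne then
        .ex (x + 1) (.conj (.rel .diam x (x + 1)) (ST boxOne diamOne I (x + 1)))
      else
        .all (x + 1) (.impl (.rel .r x (x + 1))
          (.ex (x + 2) (.conj (.rel .diam (x + 1) (x + 2)) (ST boxOne diamOne I (x + 2)))))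

/-! ### Conditions on relations between tuples (the k-asimulation conditions).
A relation between the two models is represented by its two directed
components; `N` is the model of the source tuple and `P` that of the target
tuple.  A tuple `(ā_m, a)` is represented as the list `as ++ [a]`, with
`m = as.length`. -/

section TupleConds

variable (N P : Model)

/-- The "p-type" condition: related tuples are nonempty and of equal length. -/
def TypeCond (A : List N.U → List P.U → Prop) : Prop :=
  ∀ as bs, A as bs → as ≠ [] ∧ as.length = bs.length

/-- (p-base). -/
def BaseCond (Θ : Set ℕ) (A : List N.U → List P.U → Prop) : Prop :=
  ∀ (as : List N.U) (bs : List P.U) (a : N.U) (b : P.U),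
    A (as ++ [a]) (bs ++ [b]) → ∀ n ∈ Θ, N.pred n a → P.pred n b

/-- (p-step). -/
def StepCond (k : ℕ) (A : List N.U → List P.U → Prop)
    (Arev : List P.U → List N.U → Prop) : Prop :=
  ∀ (as : List N.U) (bs : List P.U) (a : N.U) (b d : P.U),
    A (as ++ [a]) (bs ++ [b]) → P.rel b d → as.length < k →
    ∃ c : N.U, N.rel a c ∧ A (as ++ [a, c]) (bs ++ [b, d]) ∧
      Arev (bs ++ [b, d]) (as ++ [a, c])

/-- (p-box-1). -/
def Box1Cond (k : ℕ) (A : List N.U → List P.U → Prop) : Prop :=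
  ∀ (as : List N.U) (bs : List P.U) (a : N.U) (b d : P.U),
    A (as ++ [a]) (bs ++ [b]) → P.relBox b d → as.length < k →
    ∃ c : N.U, N.relBox a c ∧ A (as ++ [a, c]) (bs ++ [b, d])

/-- (p-box-2). -/
def Box2Cond (k : ℕ) (A : List N.U → List P.U → Prop) : Prop :=
  ∀ (as : List N.U) (bs : List P.U) (a : N.U) (b d f : P.U),
    A (as ++ [a]) (bs ++ [b]) → P.rel b d → P.relBox d f → as.length + 1 < k →
    ∃ c e : N.U, N.rel a c ∧ N.relBox c e ∧ A (as ++ [a, c, e]) (bs ++ [b, d, f])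

/-- (p-diam-1). -/
def Diam1Cond (k : ℕ) (A : List N.U → List P.U → Prop) : Prop :=
  ∀ (as : List N.U) (bs : List P.U) (a c : N.U) (b : P.U),
    A (as ++ [a]) (bs ++ [b]) → N.relDiam a c → as.length < k →
    ∃ d : P.U, P.relDiam b d ∧ A (as ++ [a, c]) (bs ++ [b, d])

/-- (p-diam-2(1)). -/
def Diam2aCond (k : ℕ) (A B : List N.U → List P.U → Prop) : Prop :=
  ∀ (as : List N.U) (bs : List P.U) (a : N.U) (b d : P.U),
    A (as ++ [a]) (bs ++ [b]) → P.rel b d → as.length + 1 < k →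
    ∃ c : N.U, N.rel a c ∧ B (as ++ [a, c]) (bs ++ [b, d])

/-- (p-diam-2(2)). -/
def Diam2bCond (k : ℕ) (B A : List N.U → List P.U → Prop) : Prop :=
  ∀ (as : List N.U) (bs : List P.U) (a c : N.U) (b : P.U),
    B (as ++ [a]) (bs ++ [b]) → N.relDiam a c → as.length < k →
    ∃ d : P.U, P.relDiam b d ∧ A (as ++ [a, c]) (bs ++ [b, d])

end TupleConds

/-- An (i,1)-modal ⟨(M₁,t),(M₂,u)⟩_k-asimulation (j = 1): a single relation `A`
given by its two directed components `A12`, `A21`. -/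
def IsKAsimD1 (boxOne : Bool) (Θ : Set ℕ) (M₁ M₂ : Model) (t : M₁.U) (u : M₂.U) (k : ℕ)
    (A12 : List M₁.U → List M₂.U → Prop) (A21 : List M₂.U → List M₁.U → Prop) : Prop :=
  TypeCond M₁ M₂ A12 ∧ TypeCond M₂ M₁ A21 ∧
  A12 [t] [u] ∧
  BaseCond M₁ M₂ Θ A12 ∧ BaseCond M₂ M₁ Θ A21 ∧
  StepCond M₁ M₂ k A12 A21 ∧ StepCond M₂ M₁ k A21 A12 ∧
  (if boxOne then Box1Cond M₁ M₂ k A12 ∧ Box1Cond M₂ M₁ k A21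
   else Box2Cond M₁ M₂ k A12 ∧ Box2Cond M₂ M₁ k A21) ∧
  Diam1Cond M₁ M₂ k A12 ∧ Diam1Cond M₂ M₁ k A21

/-- An (i,2)-modal ⟨(M₁,t),(M₂,u)⟩_k-asimulation (j = 2): an ordered pair
(A, B) of relations, each given by its two directed components. -/
def IsKAsimD2 (boxOne : Bool) (Θ : Set ℕ) (M₁ M₂ : Model) (t : M₁.U) (u : M₂.U) (k : ℕ)
    (A12 : List M₁.U → List M₂.U → Prop) (A21 : List M₂.U → List M₁.U → Prop)
    (B12 : List M₁.U → List M₂.U → Prop) (B21 : List M₂.U → List M₁.U → Prop) : Prop :=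
  TypeCond M₁ M₂ A12 ∧ TypeCond M₂ M₁ A21 ∧
  TypeCond M₁ M₂ B12 ∧ TypeCond M₂ M₁ B21 ∧
  A12 [t] [u] ∧
  BaseCond M₁ M₂ Θ A12 ∧ BaseCond M₂ M₁ Θ A21 ∧
  StepCond M₁ M₂ k A12 A21 ∧ StepCond M₂ M₁ k A21 A12 ∧
  (if boxOne then Box1Cond M₁ M₂ k A12 ∧ Box1Cond M₂ M₁ k A21
   else Box2Cond M₁ M₂ k A12 ∧ Box2Cond M₂ M₁ k A21) ∧
  Diam2aCond M₁ M₂ k A12 B12 ∧ Diam2aCond M₂ M₁ k A21 B21 ∧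
  Diam2bCond M₁ M₂ k B12 A12 ∧ Diam2bCond M₂ M₁ k B21 A21

/-- φ(x) is invariant with respect to (i,1)-modal k-asimulations. -/
def KInvariantD1 (boxOne : Bool) (x : ℕ) (φ : FOForm) (k : ℕ) : Prop :=
  ∀ Θ : Set ℕ, (φ.predLetters : Set ℕ) ⊆ Θ →
  ∀ (M₁ M₂ : Model) (t : M₁.U) (u : M₂.U)
    (A12 : List M₁.U → List M₂.U → Prop) (A21 : List M₂.U → List M₁.U → Prop),
    IsKAsimD1 boxOne Θ M₁ M₂ t u k A12 A21 →
    ∀ (a : M₁.U) (b : M₂.U), A12 [a] [b] → SatAt M₁ a x φ → SatAt M₂ b x φ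

/-- φ(x) is invariant with respect to (i,2)-modal k-asimulations. -/
def KInvariantD2 (boxOne : Bool) (x : ℕ) (φ : FOForm) (k : ℕ) : Prop :=
  ∀ Θ : Set ℕ, (φ.predLetters : Set ℕ) ⊆ Θ →
  ∀ (M₁ M₂ : Model) (t : M₁.U) (u : M₂.U)
    (A12 : List M₁.U → List M₂.U → Prop) (A21 : List M₂.U → List M₁.U → Prop)
    (B12 : List M₁.U → List M₂.U → Prop) (B21 : List M₂.U → List M₁.U → Prop),
    IsKAsimD2 boxOne Θ M₁ M₂ t u k A12 A21 B12 B21 →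
    ∀ (a : M₁.U) (b : M₂.U), A12 [a] [b] → SatAt M₁ a x φ → SatAt M₂ b x φ

/-! ### Conditions for asimulations *simpliciter* (relations between elements). -/

section ElemConds

variable (N P : Model)

/-- (base). -/
def BaseCondE (Θ : Set ℕ) (A : N.U → P.U → Prop) : Prop :=
  ∀ (a : N.U) (b : P.U), A a b → ∀ n ∈ Θ, N.pred n a → P.pred n b

/-- (step). -/
def StepCondE (A : N.U → P.U → Prop) (Arev : P.U → N.U → Prop) : Prop :=
  ∀ (a : N.U) (b d : P.U), A a b → P.rel b d →
    ∃ c : N.U, N.rel a c ∧ A c d ∧ Arev d c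

/-- (box-1). -/
def Box1CondE (A : N.U → P.U → Prop) : Prop :=
  ∀ (a : N.U) (b d : P.U), A a b → P.relBox b d →
    ∃ c : N.U, N.relBox a c ∧ A c d

/-- (box-2). -/
def Box2CondE (A : N.U → P.U → Prop) : Prop :=
  ∀ (a : N.U) (b d f : P.U), A a b → P.rel b d → P.relBox d f →
    ∃ c e : N.U, N.rel a c ∧ N.relBox c e ∧ A e f

/-- (diam-1). -/
def Diam1CondE (A : N.U → P.U → Prop) : Prop :=
  ∀ (a c : N.U) (b : P.U), A a b → N.relDiam a c →
    ∃ d : P.U, P.relDiam b d ∧ A c d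

/-- (diam-2(1)). -/
def Diam2aCondE (A B : N.U → P.U → Prop) : Prop :=
  ∀ (a : N.U) (b d : P.U), A a b → P.rel b d →
    ∃ c : N.U, N.rel a c ∧ B c d

/-- (diam-2(2)). -/
def Diam2bCondE (B A : N.U → P.U → Prop) : Prop :=
  ∀ (a c : N.U) (b : P.U), B a b → N.relDiam a c →
    ∃ d : P.U, P.relDiam b d ∧ A c d

end ElemConds

/-- An (i,1)-modal ⟨(M₁,t),(M₂,u)⟩-asimulation (j = 1). -/
def IsAsimD1 (boxOne : Bool) (Θ : Set ℕ) (M₁ M₂ : Model) (t : M₁.U) (u : M₂.U)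
    (A12 : M₁.U → M₂.U → Prop) (A21 : M₂.U → M₁.U → Prop) : Prop :=
  A12 t u ∧
  BaseCondE M₁ M₂ Θ A12 ∧ BaseCondE M₂ M₁ Θ A21 ∧
  StepCondE M₁ M₂ A12 A21 ∧ StepCondE M₂ M₁ A21 A12 ∧
  (if boxOne then Box1CondE M₁ M₂ A12 ∧ Box1CondE M₂ M₁ A21
   else Box2CondE M₁ M₂ A12 ∧ Box2CondE M₂ M₁ A21) ∧
  Diam1CondE M₁ M₂ A12 ∧ Diam1CondE M₂ M₁ A21

/-- An (i,2)-modal ⟨(M₁,t),(M₂,u)⟩-asimulation (j = 2). -/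
def IsAsimD2 (boxOne : Bool) (Θ : Set ℕ) (M₁ M₂ : Model) (t : M₁.U) (u : M₂.U)
    (A12 : M₁.U → M₂.U → Prop) (A21 : M₂.U → M₁.U → Prop)
    (B12 : M₁.U → M₂.U → Prop) (B21 : M₂.U → M₁.U → Prop) : Prop :=
  A12 t u ∧
  BaseCondE M₁ M₂ Θ A12 ∧ BaseCondE M₂ M₁ Θ A21 ∧
  StepCondE M₁ M₂ A12 A21 ∧ StepCondE M₂ M₁ A21 A12 ∧
  (if boxOne then Box1CondE M₁ M₂ A12 ∧ Box1CondE M₂ M₁ A21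
   else Box2CondE M₁ M₂ A12 ∧ Box2CondE M₂ M₁ A21) ∧
  Diam2aCondE M₁ M₂ A12 B12 ∧ Diam2aCondE M₂ M₁ A21 B21 ∧
  Diam2bCondE M₁ M₂ B12 A12 ∧ Diam2bCondE M₂ M₁ B21 A21

/-- φ(x) is invariant with respect to (i,1)-modal asimulations. -/
def InvariantD1 (boxOne : Bool) (x : ℕ) (φ : FOForm) : Prop :=
  ∀ Θ : Set ℕ, (φ.predLetters : Set ℕ) ⊆ Θ →
  ∀ (M₁ M₂ : Model) (t : M₁.U) (u : M₂.U)
    (A12 : M₁.U → M₂.U → Prop) (A21 : M₂.U → M₁.U → Prop),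
    IsAsimD1 boxOne Θ M₁ M₂ t u A12 A21 →
    ∀ (a : M₁.U) (b : M₂.U), A12 a b → SatAt M₁ a x φ → SatAt M₂ b x φ

/-- φ(x) is invariant with respect to (i,2)-modal asimulations. -/
def InvariantD2 (boxOne : Bool) (x : ℕ) (φ : FOForm) : Prop :=
  ∀ Θ : Set ℕ, (φ.predLetters : Set ℕ) ⊆ Θ →
  ∀ (M₁ M₂ : Model) (t : M₁.U) (u : M₂.U)
    (A12 : M₁.U → M₂.U → Prop) (A21 : M₂.U → M₁.U → Prop)
    (B12 : M₁.U → M₂.U → Prop) (B21 : M₂.U → M₁.U → Prop),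
    IsAsimD2 boxOne Θ M₁ M₂ t u A12 A21 B12 B21 →
    ∀ (a : M₁.U) (b : M₂.U), A12 a b → SatAt M₁ a x φ → SatAt M₂ b x φ

/-! ### Types, complete conjunctions, ω-saturation. -/

/-- `int(φ,x,l)`: the set of (2,2)-standard x-translations of modal
intuitionistic formulas which are (Σ_φ,x,l)-formulas. -/
def intSet (φ : FOForm) (x l : ℕ) : Set FOForm :=
  {ψ | (∃ I : MForm, ψ = ST false false I x) ∧
    ψ.predLetters ⊆ φ.predLetters ∧ ψ.freeVars ⊆ {x} ∧ ψ.degree ≤ l}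

/-- `tp_l(φ(x),M,a)`. -/
def tpSet (φ : FOForm) (x l : ℕ) (M : Model) (a : M.U) : Set FOForm :=
  {ψ | ψ ∈ intSet φ x l ∧ SatAt M a x ψ}

/-- Conjunction of a nonempty list of formulas. -/
def listConj : FOForm → List FOForm → FOForm
  | ψ, [] => ψ
  | ψ, χ :: L => FOForm.conj ψ (listConj χ L)

/-- Ψ(x) is a complete (φ,x,k)-conjunction. -/
def IsCompleteConj (φ : FOForm) (x k : ℕ) (Ψ : FOForm) : Prop :=
  (∃ (ψ₀ : FOForm) (L : List FOForm), ψ₀ ∈ intSet φ x k ∧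
    (∀ χ ∈ L, χ ∈ intSet φ x k) ∧ Ψ = listConj ψ₀ L) ∧
  ∃ (M : Model) (a : M.U), SatAt M a x (FOForm.conj Ψ φ) ∧
    ∀ ψ ∈ tpSet φ x k M a, Entails Ψ ψ

/-- `int_x(Θ)` for the (i,j)-standard translation. -/
def intX (Θ : Set ℕ) (boxOne diamOne : Bool) (x : ℕ) : Set FOForm :=
  {ψ | (∃ I : MForm, ψ = ST boxOne diamOne I x) ∧ (ψ.predLetters : Set ℕ) ⊆ Θ}

/-- `tp_x(M,t)` for the (i,j)-standard translation. -/
def tpX (Θ : Set ℕ) (boxOne diamOne : Bool) (x : ℕ) (M : Model) (t : M.U) : Set FOForm :=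
  {ψ | ψ ∈ intX Θ boxOne diamOne x ∧ SatAt M t x ψ}

/-- `imp_x(M,t) = ⋂ { t̄p_x(M,u) : t R_◇ u }` (for the (2,2)-translation). -/
def impX (Θ : Set ℕ) (x : ℕ) (M : Model) (t : M.U) : Set FOForm :=
  {ψ | ψ ∈ intX Θ false false x ∧ ∀ u : M.U, M.relDiam t u → ¬ SatAt M u x ψ}

/-- ω-saturation: for every finite tuple of parameters (the first `n` values of
an assignment `α`) and every set `Γ` of formulas with finitely many free
variables beyond the parameters, if `Γ` is consistent with the first-order
theory of `[M,ā]` (i.e. satisfiable together with it in some model), then `Γ`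
is realized in `[M,ā]`. -/
def OmegaSaturated (M : Model) : Prop :=
  ∀ (n : ℕ) (α : ℕ → M.U) (Γ : Set FOForm),
    (∃ k : ℕ, ∀ γ ∈ Γ, γ.freeVars ⊆ Finset.range (n + k)) →
    (∃ (N : Model) (β : ℕ → N.U),
      (∀ ψ : FOForm, ψ.freeVars ⊆ Finset.range n → Sat M ψ α → Sat N ψ β) ∧
      ∀ γ ∈ Γ, Sat N γ β) →
    ∃ α' : ℕ → M.U, (∀ i < n, α' i = α i) ∧ ∀ γ ∈ Γ, Sat M γ α'

/-! ### Relativization to a class κ of models. -/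

/-- κ(Θ) is first-order axiomatizable for every finite Θ (with R ∈ Θ): for
every finite set `S` of unary predicate letters there is a set of Θ-sentences
axiomatizing membership in κ. -/
def FinAxiomatizable (κ : Set Model) : Prop :=
  ∀ S : Finset ℕ, ∃ Ax : Set FOForm,
    (∀ ψ ∈ Ax, ψ.freeVars = ∅ ∧ (ψ.predLetters : Set ℕ) ⊆ (S : Set ℕ)) ∧
    ∀ M : Model, M ∈ κ ↔ ∀ ψ ∈ Ax, ∀ α : ℕ → M.U, Sat M ψ α

/-- φ κ-follows from ψ: {ψ, ¬φ} is not κ-satisfiable. -/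
def KappaFollows (κ : Set Model) (ψ φ : FOForm) : Prop :=
  ¬ ∃ M : Model, M ∈ κ ∧ ∃ α : ℕ → M.U, Sat M ψ α ∧ ¬ Sat M φ α

/-- κ-equivalence of formulas. -/
def KappaEquiv (κ : Set Model) (φ ψ : FOForm) : Prop :=
  KappaFollows κ φ ψ ∧ KappaFollows κ ψ φ

/-- φ(x) is κ-invariant with respect to (i,1)-modal asimulations. -/
def KappaInvariantD1 (κ : Set Model) (boxOne : Bool) (x : ℕ) (φ : FOForm) : Prop :=
  ∀ Θ : Set ℕ, (φ.predLetters : Set ℕ) ⊆ Θ →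
  ∀ (M₁ M₂ : Model), M₁ ∈ κ → M₂ ∈ κ →
  ∀ (t : M₁.U) (u : M₂.U)
    (A12 : M₁.U → M₂.U → Prop) (A21 : M₂.U → M₁.U → Prop),
    IsAsimD1 boxOne Θ M₁ M₂ t u A12 A21 →
    ∀ (a : M₁.U) (b : M₂.U), A12 a b → SatAt M₁ a x φ → SatAt M₂ b x φ

/-- φ(x) is κ-invariant with respect to (i,2)-modal asimulations. -/
def KappaInvariantD2 (κ : Set Model) (boxOne : Bool) (x : ℕ) (φ : FOForm) : Prop :=
  ∀ Θ : Set ℕ, (φ.predLetters : Set ℕ) ⊆ Θ →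
  ∀ (M₁ M₂ : Model), M₁ ∈ κ → M₂ ∈ κ →
  ∀ (t : M₁.U) (u : M₂.U)
    (A12 : M₁.U → M₂.U → Prop) (A21 : M₂.U → M₁.U → Prop)
    (B12 : M₁.U → M₂.U → Prop) (B21 : M₂.U → M₁.U → Prop),
    IsAsimD2 boxOne Θ M₁ M₂ t u A12 A21 B12 B21 →
    ∀ (a : M₁.U) (b : M₂.U), A12 a b → SatAt M₁ a x φ → SatAt M₂ b x φ

/-- φ(x) is κ-invariant with respect to (i,j)-modal asimulations
(`diamOne = true` means j = 1). -/
def KappaInvariant (κ : Set Model) (boxOne diamOne : Bool) (x : ℕ) (φ : FOForm) : Prop :=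
  if diamOne then KappaInvariantD1 κ boxOne x φ else KappaInvariantD2 κ boxOne x φ

/-!
A pair of related tuples matters only through its last entries and the number `n` of extensions
that the bound `l` still permits. Forgetting the rest turns `A` into a family of relations between
points graded by `n`, and `B` disappears into an intermediate step of the diamond condition. The
degree of the translation counts one quantifier for `→` and two for `□` and `◇`, which is exactly
what the step, box and diamond conditions consume. Hence the `n`-th relation preserves the forcing
of all formulas whose translation has degree at most `n`. Implication is the only connective for
which the induction needs both directions of the asimulation, because its antecedent is transferred
backwards.
-/

/-- The propositional letters occurring in a modal formula, the modal counterpart of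
`FOForm.predLetters`. -/
def MForm.letters : MForm → Finset ℕ
  | .bot => ∅
  | .prop n => {n}
  | .conj I J => I.letters ∪ J.letters
  | .disj I J => I.letters ∪ J.letters
  | .impl I J => I.letters ∪ J.letters
  | .box I => I.letters
  | .diam I => I.letters

/-- The modal depth matching the degree of the (2,2)-standard translation: `□` and `◇` count twice
because the clauses (□₂) and (◇₂) quantify along `R` before quantifying along `R_□` or `R_◇`. -/
def MForm.depth : MForm → ℕ
  | .bot => 0
  | .prop _ => 0
  | .conj I J => max I.depth J.depth
  | .disj I J => max I.depth J.depth
  | .impl I J => max I.depth J.depth + 1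
  | .box I => I.depth + 2
  | .diam I => I.depth + 2

/-- Kripke forcing of a modal formula at a point of a model, with the (2,2) clauses for `□` and
`◇`. It lets the argument avoid variables and assignments. -/
def Model.Forces (M : Model) : MForm → M.U → Prop
  | .bot, _ => False
  | .prop n, a => M.pred n a
  | .conj I J, a => M.Forces I a ∧ M.Forces J a
  | .disj I J, a => M.Forces I a ∨ M.Forces J a
  | .impl I J, a => ∀ b, M.rel a b → M.Forces I b → M.Forces J b
  | .box I, a => ∀ b, M.rel a b → ∀ c, M.relBox b c → M.Forces I c
  | .diam I, a => ∀ b, M.rel a b → ∃ c, M.relDiam b c ∧ M.Forces I c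

theorem predLetters_ST (boxOne diamOne : Bool) (I : MForm) (x : ℕ) :
    (ST boxOne diamOne I x).predLetters = I.letters := by
  induction I generalizing x <;> cases boxOne <;> cases diamOne <;>
    simp_all [ST, FOForm.predLetters, MForm.letters]

theorem degree_ST (I : MForm) (x : ℕ) : (ST false false I x).degree = I.depth := by
  induction I generalizing x <;> simp_all [ST, FOForm.degree, MForm.depth]

theorem sat_ST_iff_forces (M : Model) (I : MForm) (x : ℕ) (α : ℕ → M.U) :
    Sat M (ST false false I x) α ↔ M.Forces I (α x) := by
  induction I generalizing x α <;> simp_all [ST, Sat, Model.Forces, Model.relOf]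

theorem satAt_ST_iff_forces (M : Model) (a : M.U) (x : ℕ) (I : MForm) :
    SatAt M a x (ST false false I x) ↔ M.Forces I a := by
  simp only [SatAt, sat_ST_iff_forces]
  exact ⟨fun h => h (fun _ => a) rfl, fun h α hα => hα ▸ h⟩

/-- One direction, from `N` to `P`, of a (2,2)-modal asimulation between points that is graded by
the number of steps left; `A'` is the opposite direction. The two diamond conditions are merged
into one, so that the second relation `B` of the pair is not mentioned. -/
structure IsGradedAsim (Θ : Set ℕ) (N P : Model) (A : ℕ → N.U → P.U → Prop)
    (A' : ℕ → P.U → N.U → Prop) : Prop where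
  base : ∀ {n a b}, A n a b → ∀ i ∈ Θ, N.pred i a → P.pred i b
  step : ∀ {n a b d}, A (n + 1) a b → P.rel b d → ∃ c, N.rel a c ∧ A n c d ∧ A' n d c
  box : ∀ {n a b d f}, A (n + 2) a b → P.rel b d → P.relBox d f →
    ∃ c e, N.rel a c ∧ N.relBox c e ∧ A n e f
  diam : ∀ {n a b d}, A (n + 2) a b → P.rel b d →
    ∃ c, N.rel a c ∧ ∀ e, N.relDiam c e → ∃ f, P.relDiam d f ∧ A n e f

theorem IsGradedAsim.forces {Θ : Set ℕ} {N P : Model} {A : ℕ → N.U → P.U → Prop}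
    {A' : ℕ → P.U → N.U → Prop} (hA : IsGradedAsim Θ N P A A') (hA' : IsGradedAsim Θ P N A' A)
    {I : MForm} (hΘ : (I.letters : Set ℕ) ⊆ Θ) {n : ℕ} (hn : I.depth ≤ n) {a : N.U} {b : P.U}
    (hab : A n a b) (ha : N.Forces I a) : P.Forces I b := by
  induction I generalizing N P A A' n a b with
  | bot => exact ha
  | prop i => exact hA.base hab i (hΘ (Finset.mem_singleton_self i)) ha
  | conj I J ihI ihJ =>
    simp only [MForm.letters, Finset.coe_union, Set.union_subset_iff] at hΘ
    obtain ⟨hnI, hnJ⟩ := max_le_iff.mp hn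
    exact ⟨ihI hA hA' hΘ.1 hnI hab ha.1, ihJ hA hA' hΘ.2 hnJ hab ha.2⟩
  | disj I J ihI ihJ =>
    simp only [MForm.letters, Finset.coe_union, Set.union_subset_iff] at hΘ
    obtain ⟨hnI, hnJ⟩ := max_le_iff.mp hn
    exact ha.imp (ihI hA hA' hΘ.1 hnI hab) (ihJ hA hA' hΘ.2 hnJ hab)
  | impl I J ihI ihJ =>
    intro d hbd hId
    simp only [MForm.letters, Finset.coe_union, Set.union_subset_iff] at hΘ
    obtain ⟨m, rfl⟩ := Nat.exists_eq_add_of_le' (Nat.le_of_add_left_le hn)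
    obtain ⟨hmI, hmJ⟩ := max_le_iff.mp (Nat.le_of_add_le_add_right hn)
    obtain ⟨c, hac, hcd, hdc⟩ := hA.step hab hbd
    have hIc : N.Forces I c := ihI hA' hA hΘ.1 hmI hdc hId
    exact ihJ hA hA' hΘ.2 hmJ hcd (ha c hac hIc)
  | box I ih =>
    intro d hbd f hdf
    obtain ⟨m, rfl⟩ := Nat.exists_eq_add_of_le' (Nat.le_of_add_left_le hn)
    obtain ⟨c, e, hac, hce, hef⟩ := hA.box hab hbd hdf
    exact ih hA hA' hΘ (Nat.le_of_add_le_add_right hn) hef (ha c hac e hce)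
  | diam I ih =>
    intro d hbd
    obtain ⟨m, rfl⟩ := Nat.exists_eq_add_of_le' (Nat.le_of_add_left_le hn)
    obtain ⟨c, hac, hdiam⟩ := hA.diam hab hbd
    obtain ⟨e, hce, hIe⟩ := ha c hac
    obtain ⟨f, hdf, hef⟩ := hdiam e hce
    exact ⟨f, hdf, ih hA hA' hΘ (Nat.le_of_add_le_add_right hn) hef hIe⟩

/-- The relation between points induced by a relation `A` between tuples: `a` and `b` end related
tuples of the same length which the bound `l` allows to be extended by `n` further entries. -/
def Linked {N P : Model} (l : ℕ) (A : List N.U → List P.U → Prop) (n : ℕ) (a : N.U) (b : P.U) :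
    Prop :=
  ∃ as bs, as.length = bs.length ∧ as.length + n ≤ l ∧ A (as ++ [a]) (bs ++ [b])

section Linked

variable {N P : Model} {l n : ℕ} {A B : List N.U → List P.U → Prop}
  {A' : List P.U → List N.U → Prop} {a : N.U} {b d f : P.U}

theorem BaseCond.of_linked {Θ : Set ℕ} (hbase : BaseCond N P Θ A) (hab : Linked l A n a b) :
    ∀ i ∈ Θ, N.pred i a → P.pred i b := by
  obtain ⟨as, bs, -, -, hA⟩ := hab
  exact hbase as bs a b hA

theorem StepCond.exists_linked (hstep : StepCond N P l A A') (hab : Linked l A (n + 1) a b)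
    (hbd : P.rel b d) : ∃ c, N.rel a c ∧ Linked l A n c d ∧ Linked l A' n d c := by
  obtain ⟨as, bs, hlen, hl, hA⟩ := hab
  obtain ⟨c, hac, hcd, hdc⟩ := hstep as bs a b d hA hbd (by omega)
  exact ⟨c, hac, ⟨as ++ [a], bs ++ [b], by simpa using hlen, by grind, by simpa using hcd⟩,
    ⟨bs ++ [b], as ++ [a], by simpa using hlen.symm, by grind, by simpa using hdc⟩⟩

theorem Box2Cond.exists_linked (hbox : Box2Cond N P l A) (hab : Linked l A (n + 2) a b)
    (hbd : P.rel b d) (hdf : P.relBox d f) :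
    ∃ c e, N.rel a c ∧ N.relBox c e ∧ Linked l A n e f := by
  obtain ⟨as, bs, hlen, hl, hA⟩ := hab
  obtain ⟨c, e, hac, hce, hef⟩ := hbox as bs a b d f hA hbd hdf (by omega)
  exact ⟨c, e, hac, hce, as ++ [a, c], bs ++ [b, d], by simpa using hlen, by grind,
    by simpa using hef⟩

theorem Diam2aCond.exists_linked (hdiam : Diam2aCond N P l A B) (hab : Linked l A (n + 2) a b)
    (hbd : P.rel b d) : ∃ c, N.rel a c ∧ Linked l B (n + 1) c d := by
  obtain ⟨as, bs, hlen, hl, hA⟩ := hab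
  obtain ⟨c, hac, hcd⟩ := hdiam as bs a b d hA hbd (by omega)
  exact ⟨c, hac, as ++ [a], bs ++ [b], by simpa using hlen, by grind, by simpa using hcd⟩

theorem Diam2bCond.exists_linked {c : N.U} (hdiam : Diam2bCond N P l B A)
    (hab : Linked l B (n + 1) a b) (hac : N.relDiam a c) :
    ∃ d, P.relDiam b d ∧ Linked l A n c d := by
  obtain ⟨as, bs, hlen, hl, hB⟩ := hab
  obtain ⟨d, hbd, hcd⟩ := hdiam as bs a c b hB hac (by omega)
  exact ⟨d, hbd, as ++ [a], bs ++ [b], by simpa using hlen, by grind, by simpa using hcd⟩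

theorem isGradedAsim_linked {Θ : Set ℕ} (hbase : BaseCond N P Θ A) (hstep : StepCond N P l A A')
    (hbox : Box2Cond N P l A) (hdiamA : Diam2aCond N P l A B) (hdiamB : Diam2bCond N P l B A) :
    IsGradedAsim Θ N P (Linked l A) (Linked l A') where
  base := hbase.of_linked
  step := hstep.exists_linked
  box := hbox.exists_linked
  diam hab hbd := by
    obtain ⟨c, hac, hcd⟩ := hdiamA.exists_linked hab hbd
    exact ⟨c, hac, fun e hce => hdiamB.exists_linked hcd hce⟩

end Linked

/-- **Key Lemma 1 (case (2,2)).**  If φ(x) = ST₂₂(I,x), k = r(φ), Σ_φ ⊆ Θ and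
(A,B) is a (2,2)-modal ⟨(M₁,t),(M₂,u)⟩_l-asimulation, then for all sides p,q,
all (m+1)-tuples (ā_m,a) over M_p and (b̄_m,b) over M_q with (ā_m,a) A (b̄_m,b)
and m + k ≤ l: M_p,a ⊨ φ(x) implies M_q,b ⊨ φ(x). -/
theorem statement_8 (I : MForm) (x : ℕ) (φ : FOForm) (hφ : φ = ST false false I x)
    (k : ℕ) (hk : k = φ.degree)
    (Θ : Set ℕ) (hΘ : (φ.predLetters : Set ℕ) ⊆ Θ)
    (M₁ M₂ : Model) (t : M₁.U) (u : M₂.U) (l : ℕ)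
    (A12 : List M₁.U → List M₂.U → Prop) (A21 : List M₂.U → List M₁.U → Prop)
    (B12 : List M₁.U → List M₂.U → Prop) (B21 : List M₂.U → List M₁.U → Prop)
    (hasim : IsKAsimD2 false Θ M₁ M₂ t u l A12 A21 B12 B21) :
    (∀ (as : List M₁.U) (bs : List M₂.U) (a : M₁.U) (b : M₂.U),
      as.length = bs.length → A12 (as ++ [a]) (bs ++ [b]) → as.length + k ≤ l →
      SatAt M₁ a x φ → SatAt M₂ b x φ) ∧
    (∀ (as : List M₂.U) (bs : List M₁.U) (a : M₂.U) (b : M₁.U),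
      as.length = bs.length → A21 (as ++ [a]) (bs ++ [b]) → as.length + k ≤ l →
      SatAt M₂ a x φ → SatAt M₁ b x φ) := by
  subst hφ hk
  rw [predLetters_ST] at hΘ
  obtain ⟨-, -, -, -, -, hbase₁, hbase₂, hstep₁, hstep₂, ⟨hbox₁, hbox₂⟩,
    hdiamA₁, hdiamA₂, hdiamB₁, hdiamB₂⟩ := hasim
  have h₁₂ := isGradedAsim_linked hbase₁ hstep₁ hbox₁ hdiamA₁ hdiamB₁
  have h₂₁ := isGradedAsim_linked hbase₂ hstep₂ hbox₂ hdiamA₂ hdiamB₂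
  simp only [satAt_ST_iff_forces, degree_ST]
  exact ⟨fun as bs a b hlen hA hl => h₁₂.forces h₂₁ hΘ le_rfl ⟨as, bs, hlen, hl, hA⟩,
    fun as bs a b hlen hA hl => h₂₁.forces h₁₂ hΘ le_rfl ⟨as, bs, hlen, hl, hA⟩⟩

end ModalIntAsim
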